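/- arXiv:1907.02308 — 2 statements merged into one kernel-verified Lean document; each statement's English description precedes it below -/
import Mathlib

section
/- A primitive word w over a linearly ordered alphabet is a Galois word if and only if w ≺_alt v for every nonempty proper suffix v of w, where ≺_alt is the alternating lexicographic order extended to words of different lengths. -/
namespace Paper

variable {α : Type*}

/-- Extended alternating lexicographic strict order; the flag `b` is `true`
when the current position index is even. -/
def altLtAux [LinearOrder α] : Bool → List α → List α → Prop
  | _, [], [] => False
  | b, [], _ :: _ => b = true
  | b, _ :: _, [] => b = false
  | b, c :: x, d :: y => (if b then c < d else d < c) ∨ (c = d ∧ altLtAux (!b) x y)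

/-- The alternating lexicographic strict order (positions indexed from 0). -/
def AltLt [LinearOrder α] (x y : List α) : Prop := altLtAux true x y

/-- The reflexive alternating lexicographic order. -/
def AltLe [LinearOrder α] (x y : List α) : Prop := x = y ∨ AltLt x y

/-- A word is primitive if its cyclic rotations are pairwise distinct. -/
def Primitive (w : List α) : Prop :=
  ∀ i j, i < w.length → j < w.length → w.rotate i = w.rotate j → i = j


/-- A primitive word `w` is a Galois word if `w ≼_alt vu` for every nontrivial
factorization `w = uv`. -/
def IsGalois [LinearOrder α] (w : List α) : Prop :=
  Primitive w ∧ ∀ u v : List α, w = u ++ v → u ≠ [] → v ≠ [] → AltLe w (v ++ u)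

/-!
Write `w = u ++ v`. If `v` is not a prefix of `w`, then the comparisons of `w` with `v` and with
`v ++ u` are decided at the same position. Otherwise `w = u ++ v = v ++ t`, and `w ≺ v` means that
`v.length` is odd. Cancelling `v` turns `v ++ t ≺ v ++ u` into `u ≺ t` for odd `v.length` and into
`t ≺ u` for even `v.length`. For `u ≠ t`, the inequality `u ≺ t` comes from comparing `w` with the
rotation `t ++ v` in one direction of the equivalence, and with the suffix `t` in the other.
-/

section AltLt

variable [LinearOrder α]

theorem altLtAux_not (b : Bool) (x y : List α) : altLtAux (!b) x y ↔ altLtAux b y x := by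
  induction x generalizing b y with
  | nil => cases y <;> simp [altLtAux]
  | cons a x ih =>
    cases y with
    | nil => simp [altLtAux]
    | cons c y =>
      have htail := ih (!b) y
      cases b <;> simp_all [altLtAux, eq_comm]

theorem altLtAux_append_append_iff {x y : List α} (hxy : ¬x <+: y) (hyx : ¬y <+: x) (b : Bool)
    (s t : List α) : altLtAux b (x ++ s) (y ++ t) ↔ altLtAux b x y := by
  induction x generalizing b y with
  | nil => exact absurd List.nil_prefix hxy
  | cons a x ih =>
    cases y with
    | nil => exact absurd List.nil_prefix hyx
    | cons c y =>
      simp only [List.cons_append, altLtAux]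
      refine or_congr_right (and_congr_right ?_)
      rintro rfl
      rw [List.cons_prefix_cons, and_iff_right rfl] at hxy hyx
      exact ih hxy hyx (!b)

theorem altLt_append_append_iff {x y : List α} (hxy : ¬x <+: y) (hyx : ¬y <+: x)
    (s t : List α) : AltLt (x ++ s) (y ++ t) ↔ AltLt x y :=
  altLtAux_append_append_iff hxy hyx true s t

theorem altLt_append_append_iff_of_length_eq {x y : List α} (hlen : x.length = y.length)
    (hne : x ≠ y) (s t : List α) : AltLt (x ++ s) (y ++ t) ↔ AltLt x y :=
  altLt_append_append_iff (fun h => hne (h.eq_of_length hlen))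
    (fun h => hne (h.eq_of_length hlen.symm).symm) s t

theorem not_altLt_nil (x : List α) : ¬AltLt x [] := by
  cases x <;> simp [AltLt, altLtAux]

theorem nil_altLt_iff {y : List α} : AltLt [] y ↔ y ≠ [] := by
  cases y <;> simp [AltLt, altLtAux]

-- Swapping the tails replaces the parity flag of `altLtAux`.
theorem altLt_cons_cons_iff {a c : α} {x y : List α} :
    AltLt (a :: x) (c :: y) ↔ a < c ∨ a = c ∧ AltLt y x := by
  simp only [AltLt, altLtAux, if_true, altLtAux_not]

theorem altLt_asymm {x y : List α} (hxy : AltLt x y) : ¬AltLt y x := by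
  induction x generalizing y with
  | nil => exact not_altLt_nil y
  | cons a x ih =>
    cases y with
    | nil => exact absurd hxy (not_altLt_nil _)
    | cons c y =>
      rw [altLt_cons_cons_iff] at hxy ⊢
      rintro (hca | ⟨rfl, htail⟩)
      · rcases hxy with hac | ⟨rfl, -⟩
        exacts [lt_asymm hac hca, lt_irrefl _ hca]
      · rcases hxy with hlt | ⟨-, htail'⟩
        exacts [lt_irrefl _ hlt, ih htail htail']

theorem altLt_append_left_iff (p x y : List α) :
    AltLt (p ++ x) (p ++ y) ↔ if Even p.length then AltLt x y else AltLt y x := by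
  induction p generalizing x y with
  | nil => simp
  | cons a p ih =>
    simp only [List.cons_append, altLt_cons_cons_iff, lt_irrefl, true_and, false_or, ih,
      List.length_cons, Nat.even_add_one, ite_not]

theorem append_altLt_self_iff {p x : List α} (hx : x ≠ []) :
    AltLt (p ++ x) p ↔ Odd p.length := by
  have hcancel := altLt_append_left_iff p x []
  rw [List.append_nil] at hcancel
  simp [hcancel, not_altLt_nil, nil_altLt_iff, hx]

end AltLt

theorem Primitive.append_ne_append_swap {u v : List α} (h : Primitive (u ++ v)) (hu : u ≠ [])
    (hv : v ≠ []) : u ++ v ≠ v ++ u := by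
  intro hcomm
  have hu_pos := List.length_pos_iff.2 hu
  have hv_pos := List.length_pos_iff.2 hv
  refine hu_pos.ne (h 0 u.length ?_ ?_ ?_)
  · rw [List.length_append]; omega
  · rw [List.length_append]; omega
  · rw [List.rotate_append_length_eq, List.rotate_zero, hcomm]

theorem length_eq_of_append_eq_append_swap {u v t : List α} (h : u ++ v = v ++ t) :
    u.length = t.length := by
  have hlen := congrArg List.length h
  simp only [List.length_append] at hlen
  omega

theorem ne_nil_of_append_eq_append_swap {u v t : List α} (h : u ++ v = v ++ t)
    (hu : u ≠ []) : t ≠ [] := by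
  rintro rfl
  exact hu (List.length_eq_zero_iff.1 (length_eq_of_append_eq_append_swap h))

section Rotation

variable [LinearOrder α] {u v t : List α}

theorem altLt_append_swap_iff_of_not_prefix (h : ¬v <+: u ++ v) :
    AltLt (u ++ v) (v ++ u) ↔ AltLt (u ++ v) v := by
  have h' : ¬u ++ v <+: v := by
    intro hpre
    have heq : u ++ v = v := hpre.eq_of_length_le (by simp)
    exact h (by rw [heq])
  simpa only [List.append_nil] using altLt_append_append_iff h' h [] u

theorem odd_length_of_altLt_rotations (hborder : u ++ v = v ++ t)
    (hvu : AltLt (u ++ v) (v ++ u)) (htv : AltLt (u ++ v) (t ++ v)) : Odd v.length := by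
  by_contra hodd
  rw [hborder, altLt_append_left_iff, if_pos (Nat.not_odd_iff_even.1 hodd)] at hvu
  have hne : u ≠ t := by
    rintro rfl
    exact altLt_asymm hvu hvu
  have hlen := length_eq_of_append_eq_append_swap hborder
  exact altLt_asymm hvu ((altLt_append_append_iff_of_length_eq hlen hne v v).1 htv)

theorem altLe_append_swap_of_odd_length (hborder : u ++ v = v ++ t) (hodd : Odd v.length)
    (ht : AltLt (u ++ v) t) : AltLe (u ++ v) (v ++ u) := by
  obtain rfl | hne := eq_or_ne u t
  · exact Or.inl hborder
  · have hlen := length_eq_of_append_eq_append_swap hborder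
    have hut : AltLt u t := by
      rwa [← List.append_nil t, altLt_append_append_iff_of_length_eq hlen hne] at ht
    rw [hborder]
    exact Or.inr ((altLt_append_left_iff v t u).2
      (by rwa [if_neg (Nat.not_even_iff_odd.2 hodd)]))

theorem IsGalois.altLt_append_swap (h : IsGalois (u ++ v)) (hu : u ≠ []) (hv : v ≠ []) :
    AltLt (u ++ v) (v ++ u) :=
  (h.2 u v rfl hu hv).resolve_left (h.1.append_ne_append_swap hu hv)

theorem IsGalois.altLt_suffix (h : IsGalois (u ++ v)) (hu : u ≠ []) (hv : v ≠ []) :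
    AltLt (u ++ v) v := by
  have hvu := h.altLt_append_swap hu hv
  by_cases hpre : v <+: u ++ v
  · obtain ⟨t, hprefix⟩ := hpre
    have hborder : u ++ v = v ++ t := hprefix.symm
    have ht := ne_nil_of_append_eq_append_swap hborder hu
    have htv : AltLt (u ++ v) (t ++ v) := by
      rw [hborder] at h ⊢
      exact h.altLt_append_swap hv ht
    have hodd := odd_length_of_altLt_rotations hborder hvu htv
    rw [hborder]
    exact (append_altLt_self_iff ht).2 hodd
  · exact (altLt_append_swap_iff_of_not_prefix hpre).1 hvu

theorem altLe_append_swap_of_altLt_suffixes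
    (h : ∀ s : List α, s <:+ u ++ v → s ≠ [] → s ≠ u ++ v → AltLt (u ++ v) s)
    (hu : u ≠ []) (hv : v ≠ []) : AltLe (u ++ v) (v ++ u) := by
  have hv_lt : AltLt (u ++ v) v := h v (List.suffix_append u v) hv (by simpa using hu)
  by_cases hpre : v <+: u ++ v
  · obtain ⟨t, hprefix⟩ := hpre
    have hborder : u ++ v = v ++ t := hprefix.symm
    have ht := ne_nil_of_append_eq_append_swap hborder hu
    have hodd : Odd v.length := by
      rwa [hborder, append_altLt_self_iff ht] at hv_lt
    have ht_lt : AltLt (u ++ v) t := h t ⟨v, hprefix⟩ ht (by simpa [hborder] using hv)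
    exact altLe_append_swap_of_odd_length hborder hodd ht_lt
  · exact Or.inr ((altLt_append_swap_iff_of_not_prefix hpre).2 hv_lt)

end Rotation

/-- a primitive word `w` is a Galois word iff `w ≺_alt v` for
every nonempty proper suffix `v` of `w` (with `≺_alt` the alternating
lexicographic order extended to words of different lengths). -/
theorem galois_iff_lt_proper_suffixes [LinearOrder α] (w : List α)
    (hprim : Primitive w) :
    IsGalois w ↔ ∀ v : List α, v <:+ w → v ≠ [] → v ≠ w → AltLt w v := by
  constructor
  · rintro hgalois v ⟨u, rfl⟩ hv hne
    exact hgalois.altLt_suffix (by simpa using hne) hv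
  · intro hsuffix
    refine ⟨hprim, ?_⟩
    rintro u v rfl hu hv
    exact altLe_append_swap_of_altLt_suffixes hsuffix hu hv

end Paper
end

section
/- Let w be a primitive Galois word over a linearly ordered alphabet and let w = u'v' = u''v'' be two factorizations of w with v' and v'' nonempty suffixes, v' ≠ v''. Then v'u' ≺_alt v''u'' if and only if v' ≺_alt v'', where the first comparison is between equal-length words and the second is in the alternating lexicographic order extended to words of different lengths. -/
/-!
If neither suffix is a prefix of the other, both comparisons are settled at the first mismatch.
Otherwise, up to exchanging them, `v'' = v'z` with `z ≠ []`. Deleting the common prefix `v'` turns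
the comparison of rotations into `u'` against `zu''` and the comparison of suffixes into the empty
word against `z`, with the same sign `(-1) ^ |v'|` in both. Without sign, both comparisons are `≺`:
the empty word precedes `z`, and `w = u'v'` strictly precedes its rotation `zu''v'`, from which the
common suffix `v'` can be cancelled because `u'` and `zu''` have the same length.
-/

namespace Paper

variable {α : Type*}

section AltLtAux

variable [LinearOrder α] {b : Bool} {x y : List α}

theorem altLtAux_not_iff_swap : altLtAux (!b) x y ↔ altLtAux b y x := by
  induction x generalizing b y with
  | nil => cases y <;> cases b <;> simp [altLtAux]
  | cons c x ih => cases y <;> cases b <;> simp [altLtAux, ← ih, eq_comm]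

theorem altLtAux_asymm (h : altLtAux b x y) : ¬altLtAux b y x := by
  induction x generalizing b y with
  | nil => cases y <;> cases b <;> simp_all [altLtAux]
  | cons c x ih =>
    cases y with
    | nil => cases b <;> simp_all [altLtAux]
    | cons d y =>
      rcases h with hlt | ⟨rfl, h⟩
      · cases b <;> simp_all [altLtAux, hlt.le, hlt.ne, hlt.ne']
      · simpa [altLtAux] using ih h

theorem altLtAux_irrefl (b : Bool) (x : List α) : ¬altLtAux b x x :=
  fun h => altLtAux_asymm h h

theorem AltLt.altLtAux_iff (h : AltLt x y) : altLtAux b x y ↔ b = true := by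
  cases b with
  | false =>
    exact iff_of_false (fun h' => altLtAux_asymm h (altLtAux_not_iff_swap.mp h')) Bool.false_ne_true
  | true => exact iff_of_true h rfl

theorem altLt_nil_left (hx : x ≠ []) : AltLt [] x := by
  obtain ⟨c, x, rfl⟩ := List.exists_cons_of_ne_nil hx
  rfl

theorem altLtAux_append_left_iff (v : List α) :
    altLtAux b (v ++ x) (v ++ y) ↔ altLtAux (b ^^ v.length.bodd) x y := by
  induction v generalizing b with
  | nil => simp
  | cons c v ih => simp [altLtAux, ih]

theorem altLtAux_append_append_iff_of_not_isPrefix (hxy : ¬x <+: y) (hyx : ¬y <+: x)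
    (s t : List α) : altLtAux b (x ++ s) (y ++ t) ↔ altLtAux b x y := by
  induction x generalizing b y with
  | nil => simp at hxy
  | cons c x ih =>
    cases y with
    | nil => simp at hyx
    | cons d y =>
      rcases eq_or_ne c d with rfl | hcd
      · simp only [List.cons_append, altLtAux]
        rw [ih (by simpa using hxy) (by simpa using hyx)]
      · simp [altLtAux, hcd]

theorem altLtAux_append_right_iff (hlen : x.length = y.length) (s : List α) :
    altLtAux b (x ++ s) (y ++ s) ↔ altLtAux b x y := by
  rcases eq_or_ne x y with rfl | hne
  · exact iff_of_false (altLtAux_irrefl _ _) (altLtAux_irrefl _ _)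
  · exact altLtAux_append_append_iff_of_not_isPrefix (fun h => hne (h.eq_of_length hlen))
      (fun h => hne (h.eq_of_length hlen.symm).symm) s s

end AltLtAux

namespace IsGalois

variable [LinearOrder α] {u v u' z : List α}

theorem altLt_append_swap_s17 (h : IsGalois (u ++ v)) (hu : u ≠ []) (hv : v ≠ []) :
    AltLt (u ++ v) (v ++ u) :=
  (h.2 u v rfl hu hv).resolve_left (h.1.append_ne_append_swap hu hv)

theorem altLt_of_append_eq (h : IsGalois (u ++ v)) (huv : u ++ v = u' ++ (v ++ z))
    (hv : v ≠ []) (hz : z ≠ []) : AltLt u (z ++ u') := by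
  rw [← List.append_assoc] at huv
  have hlen : u.length = (z ++ u').length := by
    have := congrArg List.length huv
    simp only [List.length_append] at this ⊢
    omega
  have hrot : AltLt (u ++ v) (z ++ u' ++ v) := by
    rw [huv, List.append_assoc z]
    exact (huv ▸ h).altLt_append_swap_s17 (by simp [hv]) hz
  exact (altLtAux_append_right_iff hlen v).mp hrot

theorem altLtAux_rotation_iff_of_append_eq (h : IsGalois (u ++ v))
    (huv : u ++ v = u' ++ (v ++ z)) (hv : v ≠ []) (hz : z ≠ []) (b : Bool) :
    altLtAux b (v ++ u) (v ++ z ++ u') ↔ altLtAux b v (v ++ z) := by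
  have hrot : AltLt u (z ++ u') := h.altLt_of_append_eq huv hv hz
  calc
    altLtAux b (v ++ u) (v ++ z ++ u') ↔ altLtAux (b ^^ v.length.bodd) u (z ++ u') := by
      rw [List.append_assoc, altLtAux_append_left_iff]
    _ ↔ altLtAux (b ^^ v.length.bodd) [] z := by
      rw [hrot.altLtAux_iff, (altLt_nil_left hz).altLtAux_iff]
    _ ↔ altLtAux b v (v ++ z) := by
      rw [← altLtAux_append_left_iff, List.append_nil]

end IsGalois

/-- for a primitive Galois word `w` with factorizations
`w = u'v' = u''v''` into nonempty suffixes `v' ≠ v''`, the rotations compare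
as the suffixes: `v'u' ≺_alt v''u''` iff `v' ≺_alt v''` (the latter in the
alternating order extended to words of different lengths). -/
theorem galois_rotations_ordered_as_suffixes [LinearOrder α]
    (w u' v' u'' v'' : List α) (hG : IsGalois w)
    (h1 : w = u' ++ v') (h2 : w = u'' ++ v'')
    (hv' : v' ≠ []) (hv'' : v'' ≠ []) (hne : v' ≠ v'') :
    AltLt (v' ++ u') (v'' ++ u'') ↔ AltLt v' v'' := by
  by_cases hpre : v' <+: v''
  · obtain ⟨z, rfl⟩ := hpre
    have hz : z ≠ [] := by simpa using hne
    exact (h1 ▸ hG).altLtAux_rotation_iff_of_append_eq (h1 ▸ h2) hv' hz true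
  by_cases hpre' : v'' <+: v'
  · obtain ⟨z, rfl⟩ := hpre'
    have hz : z ≠ [] := by simpa using hne
    have hswap := (h2 ▸ hG).altLtAux_rotation_iff_of_append_eq (h2 ▸ h1) hv'' hz false
    exact altLtAux_not_iff_swap.trans (hswap.trans altLtAux_not_iff_swap.symm)
  exact altLtAux_append_append_iff_of_not_isPrefix hpre hpre' u' u''

end Paper
end
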